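/- arXiv:1509.01777 — 3 statements merged into one kernel-verified Lean document; each statement's English description precedes it below -/
import Mathlib

section
/- Let D ⊆ ℝ^d be an open set with nonempty boundary ∂D and signed distance φ. Let U₀ ⊆ ℝ^d be an open set containing ∂D, and let y : U₀ → ∂D be a continuous map satisfying ‖x − y(x)‖ = dist(x, ∂D) for all x ∈ U₀. Let g : ℝ^d → ℝ^d be continuous, let K ⊆ U₀ be compact, and let (f_n)_{n≥1} be a sequence of functions f_n : U₀ → ℝ^d such that: (i) f_n → 0 uniformly on every compact subset of D, and (ii) for every ε > 0, lim_{δ→0} limsup_{n→∞} sup{ ‖ f_n(x)/‖f_n(x)‖ − g(y(x)) ‖ : x ∈ K, |φ(x)| < δ, ‖f_n(x)‖ ≥ ε } = 0. Then for every ε > 0, lim_{δ→0} limsup_{n→∞} sup{ ‖ f_n(z)/‖f_n(z)‖ − g(z̃) ‖ : z ∈ K, φ(z) > −δ, z̃ ∈ ℝ^d, ‖z − z̃‖ < δ, ‖f_n(z)‖ ≥ ε } = 0. -/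
open Filter Metric Set

/-- Let `D ⊆ ℝ^d` be open with nonempty boundary and signed distance `φ`.
Let `U₀` be open with `∂D ⊆ U₀`, `y : U₀ → ∂D` continuous with `‖x − y(x)‖ = dist(x, ∂D)`
on `U₀`. Let `g : ℝ^d → ℝ^d` be continuous, `K ⊆ U₀` compact, and `(fₙ)` a sequence of
functions `U₀ → ℝ^d` such that (i) `fₙ → 0` uniformly on compact subsets of `D`, and
(ii) for every `ε > 0`,
`lim_{δ→0} limsup_n sup{‖fₙ(x)/‖fₙ(x)‖ − g(y(x))‖ : x ∈ K, |φ(x)| < δ, ‖fₙ(x)‖ ≥ ε} = 0`.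
Then for every `ε > 0`,
`lim_{δ→0} limsup_n sup{‖fₙ(z)/‖fₙ(z)‖ − g(z̃)‖ : z ∈ K, φ(z) > −δ, ‖z − z̃‖ < δ, ‖fₙ(z)‖ ≥ ε} = 0`.
(Suprema over empty sets are interpreted as `0`, which is the convention of `sSup` on `ℝ`.) -/
theorem stmt_2 {d : ℕ} (D U₀ K : Set (EuclideanSpace ℝ (Fin d)))
    (hD : IsOpen D) (hbd : (frontier D).Nonempty)
    (hU₀ : IsOpen U₀) (hDU : frontier D ⊆ U₀)
    (φ : EuclideanSpace ℝ (Fin d) → ℝ)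
    (hφ_in : ∀ x ∈ D, φ x = infDist x (frontier D))
    (hφ_bd : ∀ x ∈ frontier D, φ x = 0)
    (hφ_out : ∀ x ∉ closure D, φ x = -infDist x (frontier D))
    (y : EuclideanSpace ℝ (Fin d) → EuclideanSpace ℝ (Fin d))
    (hy_cont : ContinuousOn y U₀)
    (hy_mem : ∀ x ∈ U₀, y x ∈ frontier D)
    (hy_dist : ∀ x ∈ U₀, ‖x - y x‖ = infDist x (frontier D))
    (g : EuclideanSpace ℝ (Fin d) → EuclideanSpace ℝ (Fin d))
    (hg : Continuous g)
    (hK : IsCompact K) (hKU : K ⊆ U₀)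
    (f : ℕ → EuclideanSpace ℝ (Fin d) → EuclideanSpace ℝ (Fin d))
    (hf0 : ∀ C : Set (EuclideanSpace ℝ (Fin d)), IsCompact C → C ⊆ D →
      TendstoUniformlyOn (fun n => f n) 0 atTop C)
    (hdir : ∀ ε : ℝ, 0 < ε →
      Tendsto (fun δ : ℝ =>
          limsup (fun n : ℕ => sSup {r : ℝ | ∃ x ∈ K, |φ x| < δ ∧ ε ≤ ‖f n x‖ ∧
            r = ‖(‖f n x‖)⁻¹ • f n x - g (y x)‖}) atTop)
        (nhdsWithin 0 (Ioi 0)) (nhds 0)) :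
    ∀ ε : ℝ, 0 < ε →
      Tendsto (fun δ : ℝ =>
          limsup (fun n : ℕ => sSup {r : ℝ | ∃ z ∈ K, -δ < φ z ∧ ε ≤ ‖f n z‖ ∧
            ∃ zt : EuclideanSpace ℝ (Fin d), ‖z - zt‖ < δ ∧
              r = ‖(‖f n z‖)⁻¹ • f n z - g zt‖}) atTop)
        (nhdsWithin 0 (Ioi 0)) (nhds 0) := by
  classical
  intro ε hε
  rw [Metric.tendsto_nhds]
  intro eta heta
  obtain ⟨η, hη, hηη⟩ : ∃ η : ℝ, 0 < η ∧ 2 * η < eta := ⟨eta / 3, by linarith, by linarith⟩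
  -- a direction vector has norm at most one
  have hdirle : ∀ v : EuclideanSpace ℝ (Fin d), ‖(‖v‖)⁻¹ • v‖ ≤ 1 := by
    intro v
    rw [norm_smul, norm_inv, norm_norm]
    exact inv_mul_le_one
  -- boundedness of g ∘ y on K
  have hgyc : ContinuousOn (fun x => g (y x)) K := hg.comp_continuousOn (hy_cont.mono hKU)
  obtain ⟨M, hM⟩ := hK.exists_bound_of_continuousOn hgyc
  have hbound : ∀ (n : ℕ) (δ : ℝ), ∀ r ∈ {r : ℝ | ∃ x ∈ K, |φ x| < δ ∧ ε ≤ ‖f n x‖ ∧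
            r = ‖(‖f n x‖)⁻¹ • f n x - g (y x)‖}, r ≤ 1 + |M| := by
    rintro n δ r ⟨x, hx, -, -, rfl⟩
    have h1 := norm_sub_le ((‖f n x‖)⁻¹ • f n x) (g (y x))
    have h2 := hdirle (f n x)
    have h3 := hM x hx
    have h4 := le_abs_self M
    linarith
  -- uniform continuity of g
  have hKc : IsCompact (cthickening 1 K ∪ y '' K) :=
    (hK.cthickening).union (hK.image_of_continuousOn (hy_cont.mono hKU))
  have huc := hKc.uniformContinuousOn_of_continuous hg.continuousOn
  rw [Metric.uniformContinuousOn_iff] at huc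
  obtain ⟨ρ, hρ, huc⟩ := huc η hη
  -- choose δ₁
  have h1 : ∀ᶠ δ in nhdsWithin (0 : ℝ) (Ioi 0), limsup (fun n : ℕ => sSup {r : ℝ | ∃ x ∈ K, |φ x| < δ ∧ ε ≤ ‖f n x‖ ∧
            r = ‖(‖f n x‖)⁻¹ • f n x - g (y x)‖}) atTop < η :=
    (hdir ε hε).eventually (gt_mem_nhds hη)
  obtain ⟨δ₁, hlim, hδ₁⟩ := (h1.and self_mem_nhdsWithin).exists
  have hδ₁ : 0 < δ₁ := hδ₁
  have hev := eventually_lt_of_limsup_lt hlim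
    (isBoundedUnder_of ⟨1 + |M|, fun n => Real.sSup_le (hbound n δ₁) (by positivity)⟩)
  set δ₂ := min δ₁ (ρ / 2) with hδ₂def
  have hδ₂ : 0 < δ₂ := lt_min hδ₁ (by linarith)
  -- compact set
  set C : Set (EuclideanSpace ℝ (Fin d)) :=
    (K ∩ closure D) ∩ {x | δ₂ ≤ infDist x (frontier D)} with hC
  have hCc : IsCompact C := (hK.inter_right isClosed_closure).inter_right
    (isClosed_le continuous_const (continuous_infDist_pt _))
  have hCD : C ⊆ D := by
    rintro x ⟨⟨-, hx⟩, hx2⟩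
    by_contra hxD
    have : x ∈ frontier D := by
      rw [hD.frontier_eq]; exact ⟨hx, hxD⟩
    have h0 := infDist_zero_of_mem this
    have hx2 : δ₂ ≤ infDist x (frontier D) := hx2
    linarith
  have hfC := (Metric.tendstoUniformlyOn_iff.1 (hf0 C hCc hCD)) ε hε
  have hsmall : ∀ᶠ δ in nhdsWithin (0 : ℝ) (Ioi 0), δ < min δ₂ (min (ρ / 2) 1) :=
    nhdsWithin_le_nhds (gt_mem_nhds (lt_min hδ₂ (lt_min (by linarith) one_pos)))
  filter_upwards [hsmall, self_mem_nhdsWithin] with δ hδ hδ0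
  have hδ0 : 0 < δ := hδ0
  obtain ⟨hδa, hδb, hδc⟩ : δ < δ₂ ∧ δ < ρ / 2 ∧ δ < 1 := by
    simpa [lt_min_iff] using hδ
  have hmain : ∀ᶠ n : ℕ in atTop, sSup {r : ℝ | ∃ z ∈ K, -δ < φ z ∧ ε ≤ ‖f n z‖ ∧
            ∃ zt : EuclideanSpace ℝ (Fin d), ‖z - zt‖ < δ ∧
              r = ‖(‖f n z‖)⁻¹ • f n z - g zt‖} ≤ 2 * η := by
    filter_upwards [hev, hfC] with n hn hnC
    apply Real.sSup_le _ (by linarith)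
    rintro r ⟨z, hzK, hzφ, hzf, zt, hzt, rfl⟩
    have hzC : z ∉ C := by
      intro hz
      have := hnC z hz
      simp only [Pi.zero_apply, dist_zero_left] at this
      linarith
    have hφz : |φ z| < δ₂ ∧ infDist z (frontier D) < δ₂ := by
      by_cases hcl : z ∈ closure D
      · have hlt : infDist z (frontier D) < δ₂ := by
          by_contra hcon
          exact hzC ⟨⟨hzK, hcl⟩, not_lt.1 hcon⟩
        refine ⟨?_, hlt⟩
        by_cases hzD : z ∈ D
        · rw [hφ_in z hzD, abs_of_nonneg infDist_nonneg]; exact hlt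
        · rw [hφ_bd z (by rw [hD.frontier_eq]; exact ⟨hcl, hzD⟩), abs_zero]; exact hδ₂
      · have h := hφ_out z hcl
        have hn0 : 0 ≤ infDist z (frontier D) := infDist_nonneg
        rw [h] at hzφ ⊢
        rw [abs_neg, abs_of_nonneg hn0]
        constructor <;> linarith
    have hle : ‖(‖f n z‖)⁻¹ • f n z - g (y z)‖ < η := by
      refine lt_of_le_of_lt (le_csSup ⟨1 + |M|, fun r hr => hbound n δ₁ r hr⟩ ?_) hn
      exact ⟨z, hzK, hφz.1.trans_le (min_le_left _ _), hzf, rfl⟩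
    have hgd : dist (g (y z)) (g zt) < η := by
      apply huc _ (Or.inr ⟨z, hzK, rfl⟩) _ (Or.inl ?_)
      · have hd := hy_dist z (hKU hzK)
        have h2 : δ₂ ≤ ρ / 2 := min_le_right _ _
        have h3 := dist_triangle_left (y z) zt z
        rw [dist_eq_norm z, dist_eq_norm z, hd] at h3
        linarith [hφz.2]
      · apply mem_cthickening_of_dist_le zt z 1 K hzK
        rw [dist_comm, dist_eq_norm]; linarith
    rw [dist_eq_norm] at hgd
    have := norm_sub_le_norm_sub_add_norm_sub ((‖f n z‖)⁻¹ • f n z) (g (y z)) (g zt)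
    linarith
  have hnn : ∀ n : ℕ, 0 ≤ sSup {r : ℝ | ∃ z ∈ K, -δ < φ z ∧ ε ≤ ‖f n z‖ ∧
            ∃ zt : EuclideanSpace ℝ (Fin d), ‖z - zt‖ < δ ∧
              r = ‖(‖f n z‖)⁻¹ • f n z - g zt‖} := by
    intro n
    apply Real.sSup_nonneg
    rintro r ⟨z, -, -, -, zt, -, rfl⟩
    exact norm_nonneg _
  have hup := limsup_le_of_le (isCoboundedUnder_le_of_le atTop hnn) hmain
  have hlo := le_limsup_of_frequently_le (f := atTop) (Frequently.of_forall hnn)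
    (isBoundedUnder_of_eventually_le hmain)
  rw [Real.dist_eq, sub_zero, abs_of_nonneg hlo]
  linarith
end

section
/- Fix ε₀ > 0, y₀ ∈ (0, ε₀), and constants C ≥ 0, C₆ ≥ 0. Let (ψ_n)_{n≥1} be a sequence of Lebesgue-integrable functions ψ_n : [−ε₀, ε₀] → ℝ and (b_n)_{n≥1} a sequence with b_n ∈ (0, ε₀) and b_n → 0, such that: (i) ψ_n(s) ≥ −C for all s ∈ [−ε₀, ε₀] and all n; (ii) sup_{y ∈ [b_n, ε₀]} ψ_n(y) ≤ C₆ for all n; (iii) for every ε ∈ (0, ε₀), ∫_{−ε}^{ε} ψ_n(z) dz → ∞ as n → ∞. Define S_n(x) := ∫_{y₀}^{x} exp( −2 ∫_{b_n}^{y} ψ_n(z) dz ) dy for x ∈ [−ε₀, ε₀]. Then: limsup_{n→∞} S_n(x) < ∞ for every x ∈ (0, ε₀], and lim_{n→∞} S_n(x) = −∞ for every x ∈ [−ε₀, 0). -/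
open Filter Set intervalIntegral

/-- Scale-function estimates. With `ψₙ` integrable on `[−ε₀, ε₀]`,
`ψₙ ≥ −C`, `ψₙ ≤ C₆` on `[bₙ, ε₀]` where `bₙ → 0`, `bₙ ∈ (0, ε₀)`, and
`∫_{−ε}^{ε} ψₙ → ∞` for every `ε ∈ (0, ε₀)`, the scale functions
`Sₙ(x) = ∫_{y₀}^{x} exp(−2∫_{bₙ}^{y} ψₙ(z) dz) dy` satisfy
`limsup_n Sₙ(x) < ∞` for `x ∈ (0, ε₀]` and `Sₙ(x) → −∞` for `x ∈ [−ε₀, 0)`. -/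
theorem stmt_5 (ε₀ y₀ C C₆ : ℝ) (hε₀ : 0 < ε₀) (hy₀ : y₀ ∈ Ioo 0 ε₀)
    (hC : 0 ≤ C) (hC₆ : 0 ≤ C₆)
    (ψ : ℕ → ℝ → ℝ)
    (hint : ∀ n, MeasureTheory.IntegrableOn (ψ n) (Icc (-ε₀) ε₀))
    (b : ℕ → ℝ) (hb : ∀ n, b n ∈ Ioo 0 ε₀) (hb0 : Tendsto b atTop (nhds 0))
    (hlow : ∀ n, ∀ s ∈ Icc (-ε₀) ε₀, -C ≤ ψ n s)
    (hup : ∀ n, ∀ y ∈ Icc (b n) ε₀, ψ n y ≤ C₆)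
    (hspike : ∀ ε ∈ Ioo 0 ε₀, Tendsto (fun n : ℕ => ∫ z in (-ε)..ε, ψ n z) atTop atTop)
    (S : ℕ → ℝ → ℝ)
    (hS : ∀ n, ∀ x ∈ Icc (-ε₀) ε₀,
      S n x = ∫ y in y₀..x, Real.exp (-2 * ∫ z in (b n)..y, ψ n z)) :
    (∀ x ∈ Ioc 0 ε₀, limsup (fun n : ℕ => ((S n x : ℝ) : EReal)) atTop < ⊤) ∧
    (∀ x ∈ Ico (-ε₀) 0, Tendsto (fun n : ℕ => S n x) atTop atBot) := by
  have hii : ∀ n, ∀ u ∈ Icc (-ε₀) ε₀, ∀ v ∈ Icc (-ε₀) ε₀,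
      IntervalIntegrable (ψ n) MeasureTheory.volume u v := by
    intro n u hu v hv
    rw [intervalIntegrable_iff]
    refine (hint n).mono_set ?_
    exact (uIoc_subset_uIcc).trans (uIcc_subset_Icc hu hv)
  have hcont : ∀ n, ContinuousOn (fun y => Real.exp (-2 * ∫ z in (b n)..y, ψ n z))
      (Icc (-ε₀) ε₀) := by
    intro n
    have h1 : ContinuousOn (fun y => ∫ z in (b n)..y, ψ n z) (uIcc (-ε₀) ε₀) := by
      refine intervalIntegral.continuousOn_primitive_interval'
        (hii n _ ⟨le_refl _, by linarith⟩ _ ⟨by linarith, le_refl _⟩) ?_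
      rw [uIcc_of_le (by linarith)]
      exact ⟨by linarith [(hb n).1], (hb n).2.le⟩
    rw [uIcc_of_le (by linarith)] at h1
    exact Real.continuous_exp.comp_continuousOn (continuousOn_const.mul h1)
  have hei : ∀ n, ∀ u ∈ Icc (-ε₀) ε₀, ∀ v ∈ Icc (-ε₀) ε₀,
      IntervalIntegrable (fun y => Real.exp (-2 * ∫ z in (b n)..y, ψ n z))
        MeasureTheory.volume u v := by
    intro n u hu v hv
    exact ((hcont n).mono (uIcc_subset_Icc hu hv)).intervalIntegrable
  have hlowI : ∀ n u v, -ε₀ ≤ u → u ≤ v → v ≤ ε₀ → -C * (v - u) ≤ ∫ z in u..v, ψ n z := by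
    intro n u v hu huv hv
    have := intervalIntegral.integral_mono_on huv
      (intervalIntegrable_const (c := -C))
      (hii n u ⟨hu, by linarith⟩ v ⟨by linarith, hv⟩)
      (fun s hs => hlow n s ⟨by linarith [hs.1], by linarith [hs.2]⟩)
    rw [intervalIntegral.integral_const, smul_eq_mul] at this
    linarith
  have hy1 := hy₀.1
  have hy2 := hy₀.2
  refine ⟨fun x hx => ?_, fun x hx => ?_⟩
  · have hx1 := hx.1
    have hx2 := hx.2
    have key : ∀ᶠ n in atTop, S n x ≤ ε₀ * Real.exp (2 * (C * ε₀)) := by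
      filter_upwards [hb0.eventually (gt_mem_nhds hy1)] with n hn
      have hbn := (hb n).1
      rw [hS n x ⟨by linarith, hx2⟩]
      rcases le_total x y₀ with h | h
      · rw [intervalIntegral.integral_symm]
        have : 0 ≤ ∫ y in x..y₀, Real.exp (-2 * ∫ z in (b n)..y, ψ n z) :=
          intervalIntegral.integral_nonneg h (fun _ _ => (Real.exp_pos _).le)
        have : 0 ≤ ε₀ * Real.exp (2 * (C * ε₀)) := by positivity
        linarith
      · have h2 := intervalIntegral.integral_mono_on h
          (hei n y₀ ⟨by linarith, by linarith⟩ x ⟨by linarith, hx2⟩)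
          (intervalIntegrable_const (c := Real.exp (2 * (C * ε₀))))
          (fun y hy => by
            apply Real.exp_le_exp.2
            have h3 := hlowI n (b n) y (by linarith) (by linarith [hy.1]) (by linarith [hy.2])
            have h4 : C * (y - b n) ≤ C * ε₀ :=
              mul_le_mul_of_nonneg_left (by linarith [hy.2]) hC
            linarith)
        rw [intervalIntegral.integral_const, smul_eq_mul] at h2
        refine h2.trans ?_
        exact mul_le_mul_of_nonneg_right (by linarith) (Real.exp_pos _).le
    refine lt_of_le_of_lt (b := ((ε₀ * Real.exp (2 * (C * ε₀)) : ℝ) : EReal)) ?_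
      (EReal.coe_lt_top _)
    refine limsup_le_of_le (by isBoundedDefault) ?_
    filter_upwards [key] with n hn
    exact_mod_cast hn
  · have hx1 := hx.1
    have hx2 := hx.2
    obtain ⟨ε, hε⟩ : ∃ ε, ε = -x / 2 := ⟨_, rfl⟩
    have hεpos : 0 < ε := by linarith
    have hεlt : ε < ε₀ := by linarith
    have hsp := hspike ε ⟨hεpos, hεlt⟩
    have key : ∀ᶠ n in atTop, S n x ≤
        -(ε * Real.exp (2 * ((∫ z in (-ε)..ε, ψ n z) + (-(C * ε₀) - C₆ * ε₀)))) := by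
      filter_upwards [hb0.eventually (gt_mem_nhds hεpos)] with n hn
      have hbn := (hb n).1
      have mx : x ∈ Icc (-ε₀) ε₀ := ⟨hx1, by linarith⟩
      have me : ε ∈ Icc (-ε₀) ε₀ := ⟨by linarith, by linarith⟩
      have mne : -ε ∈ Icc (-ε₀) ε₀ := ⟨by linarith, by linarith⟩
      have my : y₀ ∈ Icc (-ε₀) ε₀ := ⟨by linarith, by linarith⟩
      have mb : b n ∈ Icc (-ε₀) ε₀ := ⟨by linarith, by linarith⟩
      rw [hS n x mx, intervalIntegral.integral_symm]
      apply neg_le_neg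
      rw [← intervalIntegral.integral_add_adjacent_intervals (hei n x mx (-ε) mne)
        (hei n (-ε) mne y₀ my)]
      have hnn : 0 ≤ ∫ y in (-ε)..y₀, Real.exp (-2 * ∫ z in (b n)..y, ψ n z) :=
        intervalIntegral.integral_nonneg (by linarith) (fun _ _ => (Real.exp_pos _).le)
      have hupI : (∫ z in (b n)..ε, ψ n z) ≤ C₆ * ε₀ := by
        have h2 := intervalIntegral.integral_mono_on hn.le (hii n (b n) mb ε me)
          (intervalIntegrable_const (c := C₆))
          (fun s hs => hup n s ⟨hs.1, by linarith [hs.2]⟩)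
        rw [intervalIntegral.integral_const, smul_eq_mul] at h2
        have : (ε - b n) * C₆ ≤ ε₀ * C₆ := mul_le_mul_of_nonneg_right (by linarith) hC₆
        linarith
      have h2 := intervalIntegral.integral_mono_on (show x ≤ -ε by linarith)
        (intervalIntegrable_const
          (c := Real.exp (2 * ((∫ z in (-ε)..ε, ψ n z) + (-(C * ε₀) - C₆ * ε₀)))))
        (hei n x mx (-ε) mne)
        (fun y hy => by
          apply Real.exp_le_exp.2
          have myy : y ∈ Icc (-ε₀) ε₀ := ⟨by linarith [hy.1], by linarith [hy.2]⟩
          have h3 := hlowI n y (-ε) myy.1 hy.2 (by linarith)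
          have h4 : C * (-ε - y) ≤ C * ε₀ :=
            mul_le_mul_of_nonneg_left (by linarith [hy.1]) hC
          have e1 := intervalIntegral.integral_add_adjacent_intervals
            (hii n y myy (-ε) mne) (hii n (-ε) mne ε me)
          have e2 := intervalIntegral.integral_add_adjacent_intervals
            (hii n y myy (b n) mb) (hii n (b n) mb ε me)
          have e3 := intervalIntegral.integral_symm (f := ψ n)
            (μ := MeasureTheory.volume) y (b n)
          linarith)
      rw [intervalIntegral.integral_const, smul_eq_mul,
        show -ε - x = ε by linarith] at h2
      linarith
    refine tendsto_atBot_mono' _ key ?_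
    refine tendsto_neg_atTop_atBot.comp ?_
    refine Tendsto.const_mul_atTop hεpos ?_
    refine Real.tendsto_exp_atTop.comp ?_
    refine Tendsto.const_mul_atTop two_pos ?_
    exact tendsto_atTop_add_const_right _ _ hsp
end

section
/- Fix T > 0. Let (X_n)_{n≥1}, (X'_n)_{n≥1}, (X''_n)_{n≥1} be three sequences of random elements of C([0, T], ℝ) such that almost surely X_n(0) = X'_n(0) = X''_n(0) = 0 for every n, and almost surely for all 0 ≤ s ≤ t ≤ T and all n, X''_n(t) − X''_n(s) ≤ X_n(t) − X_n(s) ≤ X'_n(t) − X'_n(s). If the sequences (X'_n)_{n≥1} and (X''_n)_{n≥1} are tight, then the sequence (X_n)_{n≥1} is tight. -/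
open Filter Set MeasureTheory

/-- A sequence `(Xₙ)` of random elements of a topological space `S` (all defined on a
common probability space `(Ω, P)`) is tight if for every `ε > 0` there is a compact set
`K ⊆ S` such that `P(Xₙ ∈ K) ≥ 1 − ε` for all `n`. -/
def IsTightSeq {Ω S : Type*} [MeasurableSpace Ω] [TopologicalSpace S]
    (P : Measure Ω) (X : ℕ → Ω → S) : Prop :=
  ∀ ε : ℝ, 0 < ε → ∃ K : Set S, IsCompact K ∧
    ∀ n : ℕ, 1 - ENNReal.ofReal ε ≤ P {ω | X n ω ∈ K}

lemma compact_of_modulus {T : ℝ} (o : Icc (0:ℝ) T) (w : Icc (0:ℝ) T → Icc (0:ℝ) T → ℝ)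
    (hw : ∀ s, Continuous (w s)) (hw0 : ∀ s, w s s = 0) :
    IsCompact {f : C(Icc (0:ℝ) T, ℝ) | f o = 0 ∧ ∀ s t, |f t - f s| ≤ w s t} := by
  have hlim : ∀ s, Tendsto (w s) (nhds s) (nhds 0) := fun s => by
    have := (hw s).tendsto s
    rwa [hw0] at this
  apply ArzelaAscoli.isCompact_of_equicontinuous
  · have himg : (ContinuousMap.toFun '' {f : C(Icc (0:ℝ) T, ℝ) | f o = 0 ∧
        ∀ s t, |f t - f s| ≤ w s t}) =
        {f : Icc (0:ℝ) T → ℝ | f o = 0 ∧ ∀ s t, |f t - f s| ≤ w s t} := by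
      ext f
      constructor
      · rintro ⟨g, hg, rfl⟩
        exact hg
      · intro hf
        have hc : Continuous f := by
          rw [continuous_iff_continuousAt]
          intro s
          refine tendsto_iff_dist_tendsto_zero.2 ?_
          exact squeeze_zero (fun t => dist_nonneg) (fun t => hf.2 s t) (hlim s)
        exact ⟨⟨f, hc⟩, hf, rfl⟩
    rw [himg]
    refine IsCompact.of_isClosed_subset
      (isCompact_univ_pi (fun t => isCompact_Icc (a := -(w o t)) (b := w o t))) ?_ ?_
    · rw [setOf_and]
      refine (isClosed_eq (continuous_apply o) continuous_const).inter ?_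
      simp only [setOf_forall]
      refine isClosed_iInter fun s => isClosed_iInter fun t => ?_
      exact isClosed_le (((continuous_apply t).sub (continuous_apply s)).abs) continuous_const
    · intro f hf t _
      have := hf.2 o t
      rw [hf.1, sub_zero] at this
      exact abs_le.1 this
  · intro s
    refine Metric.equicontinuousAt_of_continuity_modulus (w s) (hlim s) _
      (Eventually.of_forall fun t f => ?_)
    rw [dist_comm]
    exact f.2.2 s t

lemma exists_modulus {T : ℝ} (K : Set C(Icc (0:ℝ) T, ℝ)) (hK : IsCompact K) :
    ∃ w : Icc (0:ℝ) T → Icc (0:ℝ) T → ℝ, (∀ s, Continuous (w s)) ∧ (∀ s, w s s = 0) ∧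
      ∀ f ∈ K, ∀ s t, |f t - f s| ≤ w s t := by
  have hc : ∀ s : Icc (0:ℝ) T,
      Continuous (fun p : Icc (0:ℝ) T × C(Icc (0:ℝ) T, ℝ) => |p.2 p.1 - p.2 s|) := by
    intro s
    fun_prop
  refine ⟨fun s t => sSup ((fun f : C(Icc (0:ℝ) T, ℝ) => |f t - f s|) '' K), ?_, ?_, ?_⟩
  · intro s
    exact hK.continuous_sSup (f := fun t (f : C(Icc (0:ℝ) T, ℝ)) => |f t - f s|) (hc s)
  · intro s
    rcases K.eq_empty_or_nonempty with rfl | h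
    · simp
    · simp [h.image_const]
  · intro f hf s t
    refine le_csSup ?_ ⟨f, hf, rfl⟩
    have h2 : Continuous (fun f : C(Icc (0:ℝ) T, ℝ) => |f t - f s|) := by fun_prop
    exact (hK.image h2).bddAbove

/-- If `X''ₙ(t) − X''ₙ(s) ≤ Xₙ(t) − Xₙ(s) ≤ X'ₙ(t) − X'ₙ(s)` for all
`s ≤ t`, all processes start at `0`, and `(X'ₙ)`, `(X''ₙ)` are tight in `C([0,T], ℝ)`,
then `(Xₙ)` is tight. -/
theorem stmt_9 {Ω : Type*} [MeasurableSpace Ω] (P : Measure Ω) [IsProbabilityMeasure P]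
    (T : ℝ) (hT : 0 < T)
    [MeasurableSpace C(Icc (0:ℝ) T, ℝ)] [BorelSpace C(Icc (0:ℝ) T, ℝ)]
    (X X' X'' : ℕ → Ω → C(Icc (0:ℝ) T, ℝ))
    (hmX : ∀ n, Measurable (X n)) (hmX' : ∀ n, Measurable (X' n))
    (hmX'' : ∀ n, Measurable (X'' n))
    (hzero : ∀ᵐ ω ∂P, ∀ n : ℕ,
      X n ω ⟨0, ⟨le_refl 0, hT.le⟩⟩ = 0 ∧ X' n ω ⟨0, ⟨le_refl 0, hT.le⟩⟩ = 0 ∧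
      X'' n ω ⟨0, ⟨le_refl 0, hT.le⟩⟩ = 0)
    (hcomp : ∀ᵐ ω ∂P, ∀ n : ℕ, ∀ s t : Icc (0:ℝ) T, s ≤ t →
      X'' n ω t - X'' n ω s ≤ X n ω t - X n ω s ∧
      X n ω t - X n ω s ≤ X' n ω t - X' n ω s)
    (htX' : IsTightSeq P X') (htX'' : IsTightSeq P X'') :
    IsTightSeq P X := by
  intro ε hε
  obtain ⟨K', hK', h'⟩ := htX' (ε / 2) (by positivity)
  obtain ⟨K'', hK'', h''⟩ := htX'' (ε / 2) (by positivity)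
  obtain ⟨w', hw', hw0', hb'⟩ := exists_modulus K' hK'
  obtain ⟨w'', hw'', hw0'', hb''⟩ := exists_modulus K'' hK''
  let w : Icc (0:ℝ) T → Icc (0:ℝ) T → ℝ := fun s t => w' s t + w'' s t
  refine ⟨_, compact_of_modulus ⟨0, ⟨le_refl 0, hT.le⟩⟩ w
    (fun s => (hw' s).add (hw'' s)) (fun s => by simp [w, hw0', hw0'']), fun n => ?_⟩
  have hmA : MeasurableSet {ω | X' n ω ∈ K'} := hmX' n hK'.isClosed.measurableSet
  have hmB : MeasurableSet {ω | X'' n ω ∈ K''} := hmX'' n hK''.isClosed.measurableSet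
  have hA : P {ω | X' n ω ∈ K'}ᶜ ≤ ENNReal.ofReal (ε / 2) := by
    rw [prob_compl_eq_one_sub hmA]
    exact tsub_le_iff_tsub_le.1 (h' n)
  have hB : P {ω | X'' n ω ∈ K''}ᶜ ≤ ENNReal.ofReal (ε / 2) := by
    rw [prob_compl_eq_one_sub hmB]
    exact tsub_le_iff_tsub_le.1 (h'' n)
  set G := {ω | X n ω ∈ {f : C(Icc (0:ℝ) T, ℝ) | f ⟨0, ⟨le_refl 0, hT.le⟩⟩ = 0 ∧
    ∀ s t, |f t - f s| ≤ w s t}} with hG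
  have hsub : (univ : Set Ω) ≤ᵐ[P]
      (G ∪ ({ω | X' n ω ∈ K'}ᶜ ∪ {ω | X'' n ω ∈ K''}ᶜ) : Set Ω) := by
    filter_upwards [hzero, hcomp] with ω h0 hc _
    by_cases ha : X' n ω ∈ K'
    swap
    · exact Or.inr (Or.inl ha)
    by_cases hb : X'' n ω ∈ K''
    swap
    · exact Or.inr (Or.inr hb)
    refine Or.inl ⟨(h0 n).1, fun s t => ?_⟩
    have e1 := abs_le.1 (hb' _ ha s t)
    have e2 := abs_le.1 (hb'' _ hb s t)
    have hw : w s t = w' s t + w'' s t := rfl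
    rw [hw, abs_le]
    rcases le_total s t with hst | hst
    · have := hc n s t hst
      constructor <;> linarith
    · have := hc n t s hst
      constructor <;> linarith
  have h1 := measure_mono_ae hsub
  rw [measure_univ] at h1
  rw [tsub_le_iff_right]
  calc 1 ≤ P (G ∪ ({ω | X' n ω ∈ K'}ᶜ ∪ {ω | X'' n ω ∈ K''}ᶜ)) := h1
    _ ≤ P G + (P {ω | X' n ω ∈ K'}ᶜ + P {ω | X'' n ω ∈ K''}ᶜ) :=
      (measure_union_le _ _).trans (by gcongr; exact measure_union_le _ _)
    _ ≤ P G + (ENNReal.ofReal (ε / 2) + ENNReal.ofReal (ε / 2)) := by gcongr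
    _ = P G + ENNReal.ofReal ε := by
      rw [← ENNReal.ofReal_add (by positivity) (by positivity), add_halves]
end
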